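/- Let c₁ > 0 and A ≥ 0, and let θ ∈ L³ of a finite measure space with a family of nested measurable sets Ω^{(λ)} for λ ∈ (0, λ₀], decreasing in λ (Ω^{(λ)} ⊆ Ω^{(λ/2)}), such that for every λ, ‖θ‖_{L³(Ω^{(λ)})} ≤ c₁ ‖θ‖_{L³(Ω^{(λ/2)} \ Ω^{(λ)})} + A. Then for every λ, ‖θ‖_{L³(Ω^{(λ)})}³ ≤ (4 c₁³ + 1) · 4 A³; in particular ‖θ‖_{L³(Ω^{(λ)})} is bounded by a constant depending only on c₁ and A. -/

import Mathlib

/-!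
Put `f l = ∫_{Ω l} |θ|³`, `C = 4 c₁³` and `B = 4 A³`. Cubing the hypothesis with
`(a + b)³ ≤ 4 a³ + 4 b³` gives `f l ≤ C (f (l/2) - f l) + B`, the integral over the hole
`Ω (l/2) \ Ω l` being the difference of the two integrals. Adding `C f l` to both sides fills the
hole: `f l ≤ m f (l/2) + B / (C + 1)` with `m = C / (C + 1) < 1`. The fixed point of this affine
contraction is `B`, and `f` is bounded by `∫ |θ|³`, so iterating along `l, l/2, l/4, …` yields
`f l ≤ B + mⁿ ∫ |θ|³` for all `n` (`le_of_filling_hole`). Letting `n → ∞` gives `f l ≤ 4 A³`, which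
is even better than the claimed bound.
-/

open MeasureTheory

/-- Iteration of the filling-hole inequality: a function bounded above satisfying it is at most the
fixed point `B` of the contraction `t ↦ (C t + B) / (C + 1)`. -/
lemma le_of_filling_hole {f : ℝ → ℝ} {C B M l₀ : ℝ} (hC : 0 ≤ C) (hB : 0 ≤ B)
    (hM : ∀ l, f l ≤ M)
    (h : ∀ l ∈ Set.Ioc (0 : ℝ) l₀, f l ≤ C * (f (l / 2) - f l) + B) :
    ∀ l ∈ Set.Ioc (0 : ℝ) l₀, f l ≤ B := by
  have hC1 : 0 < C + 1 := by linarith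
  have iter : ∀ n : ℕ, ∀ l ∈ Set.Ioc (0 : ℝ) l₀, f l ≤ B + (C / (C + 1)) ^ n * M := by
    intro n
    induction n with
    | zero =>
      intro l _
      have := hM l
      simp only [pow_zero]
      linarith
    | succ n ih =>
      intro l hl
      have h1 := h l hl
      have h2 := ih (l / 2) ⟨by linarith [hl.1], by linarith [hl.1, hl.2]⟩
      have h3 := mul_le_mul_of_nonneg_left h2 hC
      have h4 : (C + 1) * (B + (C / (C + 1)) ^ (n + 1) * M)
          = C * (B + (C / (C + 1)) ^ n * M) + B := by
        rw [pow_succ]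
        field_simp
        ring
      refine le_of_mul_le_mul_left ?_ hC1
      rw [h4]
      linarith
  intro l hl
  have hlim : Filter.Tendsto (fun n : ℕ => B + (C / (C + 1)) ^ n * M) Filter.atTop
      (nhds (B + 0 * M)) :=
    ((tendsto_pow_atTop_nhds_zero_of_lt_one (by positivity)
      ((div_lt_one hC1).2 (by linarith))).mul_const M).const_add B
  have := ge_of_tendsto' hlim fun n => iter n l hl
  simpa using this

/-- The hypothesis on cube roots, cubed by means of `(a + b)³ ≤ 4 a³ + 4 b³`. -/
lemma le_of_rpow_third_le {x y c A : ℝ} (hx : 0 ≤ x) (hy : 0 ≤ y) (hc : 0 ≤ c) (hA : 0 ≤ A)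
    (h : x ^ ((1 : ℝ) / 3) ≤ c * y ^ ((1 : ℝ) / 3) + A) :
    x ≤ 4 * c ^ 3 * y + 4 * A ^ 3 := by
  have cube : ∀ z : ℝ, 0 ≤ z → (z ^ ((1 : ℝ) / 3)) ^ 3 = z := fun z hz => by
    rw [← Real.rpow_natCast, ← Real.rpow_mul hz]
    norm_num
  have hs : 0 ≤ c * y ^ ((1 : ℝ) / 3) := by positivity
  calc x = (x ^ ((1 : ℝ) / 3)) ^ 3 := (cube x hx).symm
    _ ≤ (c * y ^ ((1 : ℝ) / 3) + A) ^ 3 := by gcongr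
    _ ≤ 2 ^ (3 - 1) * ((c * y ^ ((1 : ℝ) / 3)) ^ 3 + A ^ 3) := add_pow_le hs hA 3
    _ = 4 * c ^ 3 * y + 4 * A ^ 3 := by
      rw [mul_pow, cube y hy]
      ring

/-- Localized filling-hole argument from the proof of Lemma 5.1
(inequalities (5.9)–(5.11)). -/
theorem local_filling_hole {X : Type*} [MeasurableSpace X] (μ : Measure X)
    [IsFiniteMeasure μ] (θ : X → ℝ) (c₁ A l₀ : ℝ)
    (hc : 0 < c₁) (hA : 0 ≤ A) (hl₀ : 0 < l₀)
    (hθ : Integrable (fun x => |θ x| ^ 3) μ)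
    (Ω : ℝ → Set X) (hΩm : ∀ l, MeasurableSet (Ω l))
    (hnest : ∀ l, Ω l ⊆ Ω (l / 2))
    (hrec : ∀ l ∈ Set.Ioc (0 : ℝ) l₀,
      (∫ x in Ω l, |θ x| ^ 3 ∂μ) ^ ((1 : ℝ) / 3) ≤
        c₁ * (∫ x in Ω (l / 2) \ Ω l, |θ x| ^ 3 ∂μ) ^ ((1 : ℝ) / 3) + A) :
    ∀ l ∈ Set.Ioc (0 : ℝ) l₀,
      (∫ x in Ω l, |θ x| ^ 3 ∂μ) ≤ (4 * c₁ ^ 3 + 1) * (4 * A ^ 3) := by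
  have nonneg : ∀ s : Set X, 0 ≤ ∫ x in s, |θ x| ^ 3 ∂μ := fun s =>
    integral_nonneg fun x => by positivity
  intro l hl
  have key : (∫ x in Ω l, |θ x| ^ 3 ∂μ) ≤ 4 * A ^ 3 := by
    refine le_of_filling_hole (f := fun l => ∫ x in Ω l, |θ x| ^ 3 ∂μ) (C := 4 * c₁ ^ 3)
      (M := ∫ x, |θ x| ^ 3 ∂μ) (by positivity) (by positivity) ?_ ?_ l hl
    · intro l
      exact setIntegral_le_integral hθ (Filter.Eventually.of_forall fun x => by positivity)
    · intro l hl
      have h := le_of_rpow_third_le (nonneg _) (nonneg _) hc.le hA (hrec l hl)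
      rwa [setIntegral_sdiff (hΩm l) hθ.integrableOn (hnest l)] at h
  have : 0 ≤ 4 * c₁ ^ 3 * (4 * A ^ 3) := by positivity
  linarith
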